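/- Let X be uniformly distributed on [−π, π] and let m_D = span{φ_j : j = 0, …, 2l} be the space of trigonometric polynomials of degree at most l, of linear dimension D = 2l+1. If m_D satisfies the small-ball condition with constants (β₀, κ₀), then β₀ κ₀² ≤ 3^{1/4} √2 · D^{−3/4}; equivalently, (16/(β₀κ₀²))² σ² D x / n ≥ 256 σ² D^{5/2} x / (√(2√3) n) for all σ, x > 0 and n ≥ 1. -/

import Mathlib

open MeasureTheory

/-- The uniform probability distribution on `[-π, π]`. -/
noncomputable def unifSym : Measure ℝ :=
  (ENNReal.ofReal (2 * Real.pi))⁻¹ • (volume.restrict (Set.Icc (-Real.pi) Real.pi))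

/-- The trigonometric system `φ₀ ≡ 1`, `φ_{2k}(x) = √2 cos(kx)`,
`φ_{2k+1}(x) = √2 sin(kx)` for `k ≥ 1`. -/
noncomputable def trigSym (j : ℕ) (x : ℝ) : ℝ :=
  if j = 0 then 1
  else if Even j then Real.sqrt 2 * Real.cos ((j / 2 : ℕ) * x)
  else Real.sqrt 2 * Real.sin ((j / 2 : ℕ) * x)

/-- The `L²` norm with respect to a measure `μ`. -/
noncomputable def norm2 (μ : Measure ℝ) (f : ℝ → ℝ) : ℝ :=
  Real.sqrt (∫ x, f x ^ 2 ∂μ)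

lemma aux_int_cos (m : ℤ) (hm : m ≠ 0) : ∫ x in (-Real.pi)..Real.pi, Real.cos (m * x) = 0 := by
  have h : (m : ℝ) ≠ 0 := by exact_mod_cast hm
  rw [intervalIntegral.integral_comp_mul_left (fun x => Real.cos x) h, integral_cos]
  simp

lemma aux_cross (k n : ℕ) (h : k < n) :
    ∫ x in (-Real.pi)..Real.pi, Real.cos (k * x) * Real.cos (n * x) = 0 := by
  have e : ∀ x : ℝ, Real.cos (k * x) * Real.cos (n * x) =
      2⁻¹ * Real.cos (((k + n : ℤ) : ℝ) * x) + 2⁻¹ * Real.cos (((k - n : ℤ) : ℝ) * x) := by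
    intro x
    push_cast
    rw [add_mul, sub_mul, Real.cos_add, Real.cos_sub]; ring
  simp_rw [e]
  rw [intervalIntegral.integral_add, intervalIntegral.integral_const_mul,
    intervalIntegral.integral_const_mul, aux_int_cos _ (by omega), aux_int_cos _ (by omega)]
  · simp
  · exact Continuous.intervalIntegrable (by fun_prop) _ _
  · exact Continuous.intervalIntegrable (by fun_prop) _ _

lemma aux_sq (n : ℕ) (h : n ≠ 0) :
    ∫ x in (-Real.pi)..Real.pi, Real.cos (n * x) ^ 2 = Real.pi := by
  have e : ∀ x : ℝ, Real.cos (n * x) ^ 2 =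
      2⁻¹ + 2⁻¹ * Real.cos (((2 * n : ℤ) : ℝ) * x) := by
    intro x
    push_cast
    rw [mul_assoc, Real.cos_two_mul]; ring
  simp_rw [e]
  rw [intervalIntegral.integral_add, intervalIntegral.integral_const_mul,
    aux_int_cos _ (by omega)]
  · simp; ring
  · exact Continuous.intervalIntegrable (by fun_prop) _ _
  · exact Continuous.intervalIntegrable (by fun_prop) _ _

lemma aux_parseval (a : ℕ → ℝ) (n : ℕ) :
    ∫ x in (-Real.pi)..Real.pi, (∑ k ∈ Finset.range (n + 1), a k * Real.cos (k * x)) ^ 2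
      = Real.pi * (a 0 ^ 2 + ∑ k ∈ Finset.range (n + 1), a k ^ 2) := by
  induction n with
  | zero => simp; ring
  | succ n ih =>
    have e : ∀ x : ℝ, (∑ k ∈ Finset.range (n + 1 + 1), a k * Real.cos (k * x)) ^ 2 =
      ((∑ k ∈ Finset.range (n + 1), a k * Real.cos (k * x)) ^ 2 +
       ∑ k ∈ Finset.range (n + 1), (2 * a k * a (n+1)) *
          (Real.cos (k * x) * Real.cos ((n + 1 : ℕ) * x))) +
        a (n+1) ^ 2 * Real.cos ((n + 1 : ℕ) * x) ^ 2 := by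
      intro x
      rw [Finset.sum_range_succ, add_sq, Finset.mul_sum, Finset.sum_mul]
      congr 1
      · congr 1
        apply Finset.sum_congr rfl
        intros; ring
      · ring
    simp_rw [e]
    rw [intervalIntegral.integral_add, intervalIntegral.integral_add, ih,
      intervalIntegral.integral_const_mul, aux_sq _ (by omega),
      intervalIntegral.integral_finsetSum, Finset.sum_range_succ _ (n+1)]
    · have hz : ∀ k ∈ Finset.range (n+1), ∫ x in (-Real.pi)..Real.pi, (2 * a k * a (n+1)) *
          (Real.cos (k * x) * Real.cos ((n + 1 : ℕ) * x)) = 0 := by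
        intro k hk
        rw [intervalIntegral.integral_const_mul, aux_cross _ _ (Finset.mem_range.1 hk), mul_zero]
      rw [Finset.sum_eq_zero hz]
      ring
    all_goals intros; exact Continuous.intervalIntegrable (by fun_prop) _ _

/-- coefficients of the Fejer kernel -/
noncomputable def fejA (N k : ℕ) : ℝ := if k = 0 then (N : ℝ) else 2 * ((N : ℝ) - k)

/-- the Fejer kernel -/
noncomputable def fejG (N : ℕ) (x : ℝ) : ℝ := ∑ k ∈ Finset.range N, fejA N k * Real.cos (k * x)

lemma fejG_succ (N : ℕ) (x : ℝ) : fejG (N + 1) x = fejG N x +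
    ∑ k ∈ Finset.range (N + 1), (if k = 0 then (1:ℝ) else 2) * Real.cos (k * x) := by
  have : fejG N x = ∑ k ∈ Finset.range (N + 1), fejA N k * Real.cos (k * x) := by
    rw [Finset.sum_range_succ, fejG]
    simp [fejA]
    intro h; exact Or.inl h
  rw [this, fejG, ← Finset.sum_add_distrib]
  apply Finset.sum_congr rfl
  intro k _
  unfold fejA
  split_ifs <;> push_cast <;> ring

lemma dir_id (N : ℕ) (x : ℝ) :
    (∑ k ∈ Finset.range (N + 1), (if k = 0 then (1:ℝ) else 2) * Real.cos (k * x)) *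
      (1 - Real.cos x) = Real.cos (N * x) - Real.cos ((N + 1 : ℕ) * x) := by
  induction N with
  | zero => simp
  | succ N ih =>
    rw [Finset.sum_range_succ, add_mul, ih]
    have h1 : ((N : ℝ)) * x = (N + 1 : ℕ) * x - x := by push_cast; ring
    have h2 : ((N + 1 + 1 : ℕ) : ℝ) * x = (N + 1 : ℕ) * x + x := by push_cast; ring
    rw [h1, h2, Real.cos_add, Real.cos_sub, if_neg (by omega)]
    ring

lemma fejG_id (N : ℕ) (x : ℝ) : fejG N x * (1 - Real.cos x) = 1 - Real.cos (N * x) := by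
  induction N with
  | zero => simp [fejG]
  | succ N ih => rw [fejG_succ, add_mul, ih, dir_id]; ring

lemma fejA_sum (l : ℕ) : fejA (l+1) 0 ^ 2 + ∑ k ∈ Finset.range (l + 1), fejA (l+1) k ^ 2
    = 2 * ((l+1 : ℝ) * (2 * (l+1)^2 + 1) / 3) := by
  have key : ∀ n : ℕ, ∀ c : ℝ, ∑ k ∈ Finset.range n, (2 * (c - ((k + 1 : ℕ) : ℝ))) ^ 2
      = 4 * (n * c^2 - c * n * (n+1) + n * (n+1) * (2*n+1) / 6) := by
    intro n c
    induction n with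
    | zero => simp
    | succ n ih => rw [Finset.sum_range_succ, ih]; push_cast; ring
  rw [Finset.sum_range_succ']
  simp only [fejA, if_true, Nat.add_eq_zero_iff, one_ne_zero, and_false, if_false]
  rw [key]; push_cast; ring

lemma fejG_norm (l : ℕ) : norm2 unifSym (fejG (l+1)) =
    Real.sqrt ((l+1 : ℝ) * (2 * (l+1)^2 + 1) / 3) := by
  unfold norm2 unifSym
  congr 1
  rw [integral_smul_measure, integral_Icc_eq_integral_Ioc, ← intervalIntegral.integral_of_le
    (by linarith [Real.pi_pos])]
  unfold fejG
  rw [aux_parseval, fejA_sum, ENNReal.toReal_inv, ENNReal.toReal_ofReal (by positivity)]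
  have := Real.pi_ne_zero
  simp only [smul_eq_mul]
  field_simp

lemma fejG_mem (l : ℕ) : fejG (l+1) ∈
    Submodule.span ℝ {f : ℝ → ℝ | ∃ j ≤ 2 * l, f = trigSym j} := by
  have : fejG (l+1) = ∑ k ∈ Finset.range (l+1), (fejA (l+1) k * (if k = 0 then 1 else (√2)⁻¹)) •
      trigSym (2 * k) := by
    funext x
    simp only [fejG, Finset.sum_apply, Pi.smul_apply, smul_eq_mul, trigSym]
    apply Finset.sum_congr rfl
    intro k _
    rcases Nat.eq_zero_or_pos k with rfl | hk
    · simp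
    · have h2 : √(2:ℝ) ≠ 0 := by positivity
      have h3 : k ≠ 0 := by omega
      simp [h3]
      field_simp
  rw [this]
  refine Submodule.sum_mem _ fun k hk => Submodule.smul_mem _ _ (Submodule.subset_span ⟨2*k, ?_, rfl⟩)
  have := Finset.mem_range.1 hk
  omega

instance : IsProbabilityMeasure unifSym := ⟨by
  have : 0 < Real.pi := Real.pi_pos
  unfold unifSym
  simp only [Measure.smul_apply, Measure.restrict_apply_univ, Real.volume_Icc, smul_eq_mul]
  rw [show Real.pi - -Real.pi = 2 * Real.pi by ring]
  exact ENNReal.inv_mul_cancel (by simpa using this) ENNReal.ofReal_ne_top⟩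

lemma unif_le (S : Set ℝ) (w : ℝ) (hw : 0 ≤ w)
    (h : ∀ x ∈ S, x ∈ Set.Icc (-Real.pi) Real.pi → |x| ≤ w) :
    (unifSym S).toReal ≤ w / Real.pi := by
  have hpi : 0 < Real.pi := Real.pi_pos
  have h1 : volume.restrict (Set.Icc (-Real.pi) Real.pi) S ≤ ENNReal.ofReal (2 * w) := by
    rw [Measure.restrict_apply' measurableSet_Icc]
    calc volume (S ∩ Set.Icc (-Real.pi) Real.pi) ≤ volume (Set.Icc (-w) w) :=
          measure_mono fun x hx => abs_le.1 (h x hx.1 hx.2)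
      _ = _ := by rw [Real.volume_Icc]; congr 1; ring
  unfold unifSym
  rw [Measure.smul_apply, smul_eq_mul, ENNReal.toReal_mul, ENNReal.toReal_inv,
    ENNReal.toReal_ofReal (by positivity)]
  have h2 := ENNReal.toReal_mono ENNReal.ofReal_ne_top h1
  rw [ENNReal.toReal_ofReal (by positivity)] at h2
  calc _ ≤ (2 * Real.pi)⁻¹ * (2 * w) := by gcongr
    _ = _ := by field_simp

lemma sin_lower {u : ℝ} (h0 : 0 ≤ u) : u - u ^ 3 / 6 ≤ Real.sin u := by
  exact Real.sin_ge_sub_cube h0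

lemma fej_meas (N : ℕ) (T : ℝ) (hT : 1 ≤ T * 0.7664 ^ 2) :
    (unifSym {x | T ≤ |fejG N x|}).toReal ≤ 0.731 / √T := by
  have hT0 : 0 < T := by nlinarith
  have hs : 0 < √T := Real.sqrt_pos.2 hT0
  have hss : √T ^ 2 = T := Real.sq_sqrt hT0.le
  have hpi := Real.pi_gt_d6
  refine (unif_le _ (2 / (0.8709 * √T)) (by positivity) ?_).trans ?_
  · intro x hx hxI
    have hx : T ≤ |fejG N x| := hx
    set u := |x| / 2 with hu
    have hu0 : 0 ≤ u := by positivity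
    have hu1 : u ≤ Real.pi / 2 := by
      have := abs_le.2 hxI
      linarith
    have hcos : 1 - Real.cos x = 2 * Real.sin u ^ 2 := by
      rw [← Real.cos_abs, show |x| = 2 * u by rw [hu]; ring, Real.cos_two_mul, Real.sin_sq]; ring
    have hid := fejG_id N x
    have hle : T * Real.sin u ^ 2 ≤ 1 := by
      have h1 : |fejG N x| * (2 * Real.sin u ^ 2) ≤ 2 := by
        rw [← abs_of_nonneg (show 0 ≤ 2 * Real.sin u ^ 2 by positivity), ← abs_mul, ← hcos, hid,
          abs_le]
        constructor <;> linarith [Real.cos_le_one (N * x), Real.neg_one_le_cos (N * x)]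
      nlinarith [sq_nonneg (Real.sin u)]
    have hu2 : u ≤ 0.88 := by
      by_contra hc
      push Not at hc
      have h1 : Real.sin 0.88 < Real.sin u :=
        Real.sin_lt_sin_of_lt_of_le_pi_div_two (by linarith) hu1 hc
      have h2 := sin_lower (u := 0.88) (by norm_num)
      have h3 : 0.7664 < Real.sin u := by norm_num at h2 ⊢; linarith
      nlinarith
    have h4 : 0.8709 * u ≤ Real.sin u := by
      have := sin_lower hu0
      nlinarith [mul_nonneg hu0 (show 0 ≤ 0.88 ^ 2 - u ^ 2 by nlinarith)]
    have h5 : √T * (0.8709 * u) ≤ 1 := by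
      have : (√T * (0.8709 * u)) ^ 2 ≤ 1 := by
        rw [mul_pow, hss]
        have : (0.8709 * u)^2 ≤ Real.sin u ^ 2 := by gcongr
        nlinarith
      exact (sq_le_one_iff₀ (by positivity)).1 this
    rw [le_div_iff₀ (by positivity)]
    have : |x| = 2 * u := by rw [hu]; ring
    rw [this]; linarith
  · rw [div_div, div_le_div_iff₀ (by positivity) hs]
    have h6 : (2:ℝ) ≤ 0.731 * 0.8709 * Real.pi := by norm_num at hpi ⊢; linarith
    calc 2 * √T ≤ (0.731 * 0.8709 * Real.pi) * √T := by gcongr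
      _ = _ := by ring

lemma core (l : ℕ) (κ₀ β₀ : ℝ)
    (hκ₀ : 0 < κ₀) (hβ₀ : 0 < β₀)
    (hSB : ∀ s ∈ Submodule.span ℝ {f : ℝ → ℝ | ∃ j ≤ 2 * l, f = trigSym j},
      β₀ ≤ (unifSym {x | κ₀ * norm2 unifSym s ≤ |s x|}).toReal) :
    (β₀ * κ₀ ^ 2) ^ 4 * (2 * l + 1 : ℝ) ^ 3 ≤ 3.46 := by
  have hκ1 : κ₀ ≤ 1 := by
    by_contra hc
    push Not at hc
    have h := hSB (trigSym 0) (Submodule.subset_span ⟨0, by omega, rfl⟩)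
    have hn : norm2 unifSym (trigSym 0) = 1 := by simp [norm2, trigSym]
    rw [hn] at h
    have he : {x : ℝ | κ₀ * 1 ≤ |trigSym 0 x|} = ∅ := by
      ext x; simp [trigSym, hc]
    rw [he] at h
    simp at h
    linarith
  have hβ1 : β₀ ≤ 1 := (hSB 0 (Submodule.zero_mem _)).trans measureReal_le_one
  have h := hSB _ (fejG_mem l)
  rw [fejG_norm] at h
  set W : ℝ := (l+1 : ℝ) * (2 * (l+1)^2 + 1) with hW
  have hW0 : 0 < W := by positivity
  have hD : (2 * l + 1 : ℝ) ^ 3 ≤ 4 * W := by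
    rw [hW]; have : (0:ℝ) ≤ l := by positivity
    nlinarith [sq_nonneg (l:ℝ)]
  set T := κ₀ * √(W / 3) with hTd
  have hT0 : 0 < T := by positivity
  have hT2 : T ^ 2 = κ₀ ^ 2 * (W / 3) := by
    rw [hTd, mul_pow, Real.sq_sqrt (by positivity)]
  by_cases hT : 1 ≤ T * 0.7664 ^ 2
  · have h1 := h.trans (fej_meas (l+1) T hT)
    rw [le_div_iff₀ (Real.sqrt_pos.2 hT0)] at h1
    have h2 : (β₀ * √T) ^ 4 ≤ 0.731 ^ 4 := by gcongr
    have h3 : (β₀ * √T) ^ 4 = β₀ ^ 4 * (κ₀ ^ 2 * (W / 3)) := by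
      rw [← hT2, mul_pow, show √T ^ 4 = (√T ^ 2) ^ 2 by ring, Real.sq_sqrt hT0.le]
    have h4 : κ₀ ^ 8 ≤ κ₀ ^ 2 := pow_le_pow_of_le_one hκ₀.le hκ1 (by norm_num)
    calc (β₀ * κ₀ ^ 2) ^ 4 * (2 * l + 1 : ℝ) ^ 3 = β₀ ^ 4 * κ₀ ^ 8 * (2 * l + 1 : ℝ) ^ 3 := by ring
      _ ≤ β₀ ^ 4 * κ₀ ^ 2 * (4 * W) := by gcongr
      _ = 12 * (β₀ * √T) ^ 4 := by rw [h3]; ring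
      _ ≤ 12 * 0.731 ^ 4 := by gcongr
      _ ≤ _ := by norm_num
  · push Not at hT
    rcases Nat.eq_zero_or_pos l with rfl | hl
    · have : β₀ * κ₀ ^ 2 ≤ 1 := mul_le_one₀ hβ1 (by positivity) (pow_le_one₀ hκ₀.le hκ1)
      have : (β₀ * κ₀ ^ 2) ^ 4 ≤ 1 := pow_le_one₀ (by positivity) this
      norm_num
      linarith
    · have h5 : κ₀ ^ 2 * W ≤ 8.7 := by
        have : (T * 0.7664 ^ 2) ^ 2 ≤ 1 := pow_le_one₀ (by positivity) hT.le
        rw [mul_pow, hT2] at this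
        norm_num at this ⊢
        linarith
      have h6 : (κ₀ ^ 2 * W) ^ 4 ≤ 8.7 ^ 4 := by gcongr
      have h7 : 8.7 ^ 4 * (2 * l + 1 : ℝ) ^ 3 ≤ 3.46 * W ^ 4 := by
        obtain ⟨k, rfl⟩ : ∃ k, l = k + 1 := ⟨l - 1, by omega⟩
        rcases Nat.eq_zero_or_pos k with rfl | hk
        · rw [hW]; norm_num
        · have hk1 : (1:ℝ) ≤ k := by exact_mod_cast hk
          have h18 : 57 ≤ W := by
            rw [hW]; push_cast
            have : 0 ≤ (k:ℝ)^3 := by positivity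
            nlinarith [sq_nonneg ((k:ℝ) - 1)]
          have e1 : (57:ℝ) ^ 3 ≤ W ^ 3 := by gcongr
          have e2 : (57:ℝ) ^ 3 * W ≤ W ^ 3 * W := by gcongr
          have e3 : W ^ 3 * W = W ^ 4 := by ring
          rw [e3] at e2
          norm_num at e2 hD ⊢
          linarith
      have h8 : (β₀ * κ₀ ^ 2) ^ 4 ≤ (κ₀ ^ 2) ^ 4 := by
        gcongr
        nlinarith [sq_nonneg κ₀]
      have h9 : 0 < W ^ 4 := by positivity
      have h10 : ((κ₀ ^ 2) ^ 4 * (2 * l + 1 : ℝ) ^ 3) * W ^ 4 ≤ 3.46 * W ^ 4 := by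
        calc _ = (κ₀ ^ 2 * W) ^ 4 * (2 * l + 1 : ℝ) ^ 3 := by ring
          _ ≤ 8.7 ^ 4 * (2 * l + 1 : ℝ) ^ 3 := by gcongr
          _ ≤ _ := h7
      calc _ ≤ (κ₀ ^ 2) ^ 4 * (2 * l + 1 : ℝ) ^ 3 := by gcongr
        _ ≤ _ := le_of_mul_le_mul_right h10 h9

/-- Let `X` be uniform on `[-π, π]` and let
`m_D = span{φ_j : j = 0, …, 2l}`, `D = 2l + 1`. If `m_D` satisfies the small-ball
condition with constants `(β₀, κ₀)`, then `β₀ κ₀² ≤ 3^{1/4} √2 D^{-3/4}`;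
equivalently `(16/(β₀κ₀²))² σ² D x / n ≥ 256 σ² D^{5/2} x / (√(2√3) n)` for all
`σ, x > 0` and `n ≥ 1`. -/
theorem fourier_small_ball_rate_lower_bound (l : ℕ) (κ₀ β₀ : ℝ)
    (hκ₀ : 0 < κ₀) (hβ₀ : 0 < β₀)
    (hSB : ∀ s ∈ Submodule.span ℝ {f : ℝ → ℝ | ∃ j ≤ 2 * l, f = trigSym j},
      β₀ ≤ (unifSym {x | κ₀ * norm2 unifSym s ≤ |s x|}).toReal) :
    β₀ * κ₀ ^ 2 ≤ (3 : ℝ) ^ ((1 : ℝ) / 4) * Real.sqrt 2 *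
        ((2 * l + 1 : ℕ) : ℝ) ^ (-(3 : ℝ) / 4) ∧
      ∀ σ x : ℝ, 0 < σ → 0 < x → ∀ n : ℕ, 1 ≤ n →
        256 * σ ^ 2 * ((2 * l + 1 : ℕ) : ℝ) ^ ((5 : ℝ) / 2) * x /
            (Real.sqrt (2 * Real.sqrt 3) * n) ≤
          (16 / (β₀ * κ₀ ^ 2)) ^ 2 * σ ^ 2 * ((2 * l + 1 : ℕ) : ℝ) * x / n := by
  have hc := core l κ₀ β₀ hκ₀ hβ₀ hSB
  have hD0 : (0:ℝ) < ((2 * l + 1 : ℕ) : ℝ) := by positivity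
  have hDe : (2 * l + 1 : ℝ) = ((2 * l + 1 : ℕ) : ℝ) := by push_cast; ring
  rw [hDe] at hc
  set D : ℝ := ((2 * l + 1 : ℕ) : ℝ) with hDd
  have hp : 0 < β₀ * κ₀ ^ 2 := by positivity
  generalize β₀ * κ₀ ^ 2 = p at hc hp ⊢
  have h3 : 1.73 ≤ √(3:ℝ) := Real.le_sqrt_of_sq_le (by norm_num)
  constructor
  · refine le_of_pow_le_pow_left₀ (n := 4) (by norm_num) (by positivity) ?_
    rw [mul_pow, mul_pow, ← Real.rpow_natCast (_ ^ (_:ℝ)) 4, ← Real.rpow_natCast (D ^ (_:ℝ)) 4,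
      ← Real.rpow_mul (by norm_num), ← Real.rpow_mul hD0.le,
      show √(2:ℝ) ^ 4 = (√2 ^ 2) ^ 2 by ring, Real.sq_sqrt (by norm_num)]
    norm_num
    rw [← div_eq_mul_inv, le_div_iff₀ (by positivity)]
    norm_num at hc ⊢
    linarith
  · intro σ x hσ hx n hn
    have hn0 : (0:ℝ) < n := by exact_mod_cast hn
    have hq : D ^ ((5:ℝ)/2) = D * (D * √D) := by
      rw [Real.sqrt_eq_rpow, show (5:ℝ)/2 = 1 + (1 + 1/2) by norm_num, Real.rpow_add hD0,
        Real.rpow_add hD0, Real.rpow_one]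
    have hkey : p ^ 2 * (D * √D) ≤ √(2 * √3) := by
      apply Real.le_sqrt_of_sq_le
      have : (p ^ 2 * (D * √D)) ^ 2 = p ^ 4 * D ^ 3 := by
        rw [mul_pow, mul_pow, Real.sq_sqrt hD0.le]; ring
      rw [this]; norm_num at *; linarith
    have hR : 0 < √(2 * √(3:ℝ)) := by positivity
    rw [hq, ← div_div, div_le_div_iff_of_pos_right hn0, div_le_iff₀ hR]
    have : (16 / p) ^ 2 * σ ^ 2 * D * x * √(2 * √3) =
      (256 * σ ^ 2 * D * x) / p ^ 2 * √(2 * √3) := by rw [div_pow]; ring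
    rw [this, div_mul_eq_mul_div, le_div_iff₀ (by positivity)]
    calc _ = (256 * σ ^ 2 * D * x) * (p ^ 2 * (D * √D)) := by ring
      _ ≤ _ := by gcongr
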